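/- arXiv:2001.05640 — 4 statements merged into one kernel-verified Lean document; each statement's English description precedes it below -/
import Mathlib

section
/- For every l ∈ {2,…,K}: Ψ(2^{l−1}) = {l−1}, and for every k ∈ {1,…,2^{l−1}}, Ψ(2^{l−1} + k) = {l−1, l} △ Ψ(k). -/
/-- `η(k) = 1` if `k` is even and `η(k) = ν₂(k−1) + 1` if `k` is odd (used for `k ≥ 2`),
where `ν₂(m) = padicValNat 2 m` is the 2-adic valuation. -/
def eta (k : ℕ) : ℕ := if Even k then 1 else padicValNat 2 (k - 1) + 1

/-- The set-level form `Ψ` of the map `ψ` of the paper: `Ψ(1) = ∅` and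
`Ψ(k) = Ψ(k−1) △ {η(k)}` for `k ≥ 2` (`Ψ(0)` is junk). -/
def Psi : ℕ → Finset ℕ
  | 0 => ∅
  | 1 => ∅
  | k + 2 => symmDiff (Psi (k + 1)) {eta (k + 2)}

/-!
Passing from `k` to `k + 1` toggles the element `ν₂(k) + 1`. Since `ν₂(n + k) = ν₂(k)` whenever
`2 ^ m ∣ n` and `0 < k < 2 ^ m`, the toggles made between `n + 1` and `n + 2 ^ m` are those made
between `1` and `2 ^ m`. Taking `n = 2 ^ m` gives the recursion; the toggle `m + 1` made on the
step from `2 ^ m` to `2 ^ m + 1` turns `{m}` into `{m, m + 1}`. That `Ψ(2 ^ m) = {m}`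
propagates from `m` to `m + 1` by taking `k = 2 ^ m` as well: `{m, m + 1} △ {m} = {m + 1}`.
-/

open scoped symmDiff

theorem padicValNat_add_of_pow_dvd_of_lt {p m n k : ℕ} (hn : p ^ m ∣ n) (hk : k ≠ 0)
    (hlt : k < p ^ m) : padicValNat p (n + k) = padicValNat p k := by
  have not_pow_dvd_k : ¬p ^ m ∣ k := Nat.not_dvd_of_pos_of_lt (Nat.pos_of_ne_zero hk) hlt
  have not_pow_dvd_add : ¬p ^ m ∣ n + k := by rwa [Nat.dvd_add_right hn]
  have pow_dvd_iff (a : ℕ) : p ^ a ∣ n + k ↔ p ^ a ∣ k := by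
    rcases le_total a m with ham | hma
    · exact Nat.dvd_add_right ((pow_dvd_pow p ham).trans hn)
    · exact iff_of_false (mt (pow_dvd_pow p hma).trans not_pow_dvd_add)
        (mt (pow_dvd_pow p hma).trans not_pow_dvd_k)
  rcases eq_or_ne p 1 with rfl | hp
  · simp
  · refine eq_of_forall_le_iff fun a => ?_
    rw [← padicValNat_dvd_iff_le_of_ne_one hp (by lia), pow_dvd_iff,
      padicValNat_dvd_iff_le_of_ne_one hp hk]

theorem eta_succ (k : ℕ) : eta (k + 1) = padicValNat 2 k + 1 := by
  rw [eta, Nat.add_sub_cancel]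
  split_ifs with heven
  · have two_not_dvd : ¬2 ∣ k := by rwa [← even_iff_two_dvd, ← Nat.even_add_one]
    rw [padicValNat.eq_zero_of_not_dvd two_not_dvd]
  · rfl

theorem Psi_one : Psi 1 = ∅ := rfl

theorem Psi_succ {k : ℕ} (hk : k ≠ 0) : Psi (k + 1) = Psi k ∆ {padicValNat 2 k + 1} := by
  obtain ⟨j, rfl⟩ := Nat.exists_eq_succ_of_ne_zero hk
  rw [← eta_succ, Psi]

theorem Psi_add_of_two_pow_dvd {m n k : ℕ} (hn : 2 ^ m ∣ n) (hk : 1 ≤ k) (hkm : k ≤ 2 ^ m) :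
    Psi (n + k) = Psi (n + 1) ∆ Psi k := by
  induction k, hk using Nat.le_induction with
  | base => rw [Psi_one, ← Finset.bot_eq_empty, symmDiff_bot]
  | succ k hk ih =>
    calc Psi (n + (k + 1))
        = Psi (n + k) ∆ {padicValNat 2 (n + k) + 1} := Psi_succ (by lia)
      _ = (Psi (n + 1) ∆ Psi k) ∆ {padicValNat 2 k + 1} := by
        rw [ih (by lia), padicValNat_add_of_pow_dvd_of_lt hn (by lia) hkm]
      _ = Psi (n + 1) ∆ Psi (k + 1) := by rw [symmDiff_assoc, ← Psi_succ (by lia)]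

theorem Psi_two_pow_add_one (m : ℕ) : Psi (2 ^ m + 1) = Psi (2 ^ m) ∆ {m + 1} := by
  rw [Psi_succ (by positivity), padicValNat.prime_pow]

theorem Psi_two_pow {m : ℕ} (hm : 1 ≤ m) : Psi (2 ^ m) = {m} := by
  induction m, hm using Nat.le_induction with
  | base =>
    calc Psi (2 ^ 1)
        = Psi 1 ∆ {1} := Psi_two_pow_add_one 0
      _ = {1} := by rw [Psi_one, ← Finset.bot_eq_empty, bot_symmDiff]
  | succ m _ ih =>
    calc Psi (2 ^ (m + 1))
        = Psi (2 ^ m + 2 ^ m) := by rw [pow_succ, mul_two]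
      _ = Psi (2 ^ m + 1) ∆ Psi (2 ^ m) :=
        Psi_add_of_two_pow_dvd dvd_rfl Nat.one_le_two_pow le_rfl
      _ = {m} ∆ {m + 1} ∆ {m} := by rw [Psi_two_pow_add_one, ih]
      _ = {m + 1} := by rw [symmDiff_comm, symmDiff_symmDiff_cancel_left]

/-- For every `l ∈ {2,…,K}`: `Ψ(2^(l−1)) = {l−1}`, and for every
`k ∈ {1,…,2^(l−1)}`, `Ψ(2^(l−1) + k) = {l−1, l} △ Ψ(k)` (equation (2.10)). -/
theorem psi_recursion (K : ℕ) : ∀ l, 2 ≤ l → l ≤ K →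
    Psi (2 ^ (l - 1)) = {l - 1} ∧
    ∀ k, 1 ≤ k → k ≤ 2 ^ (l - 1) →
      Psi (2 ^ (l - 1) + k) = symmDiff {l - 1, l} (Psi k) := by
  intro l hl _
  obtain ⟨m, rfl⟩ := Nat.exists_eq_add_of_le' (one_le_two.trans hl)
  rw [Nat.add_sub_cancel]
  have hpow : Psi (2 ^ m) = {m} := Psi_two_pow (Nat.le_of_succ_le_succ hl)
  have hpair : ({m} : Finset ℕ) ∆ {m + 1} = {m, m + 1} :=
    Finset.symmDiff_eq_union (Finset.disjoint_singleton.2 m.succ_ne_self.symm)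
  refine ⟨hpow, fun k hk hkm => ?_⟩
  rw [Psi_add_of_two_pow_dvd dvd_rfl hk hkm, Psi_two_pow_add_one, hpow, hpair]
end

section
/- The map Φ is odd-ordered: for every k ∈ {1,…,K}, the image Φ({1,…,2^{k−1}}) equals the collection of all odd-cardinality subsets of {1,…,k}. In particular Φ is a bijection from {1,…,2^{K−1}} onto the odd-cardinality subsets of {1,…,K}. -/
/-! `Φ` is the reflected binary Gray code in disguise. Passing from `n` to `n + 1` flips exactly the
binary digits at the positions `t ≤ ν₂(n + 1)`, so it changes `n ^^^ n / 2` in the single digit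
`ν₂(n + 1)`. Hence `t + 2 ∈ Φ(n + 1)` if and only if the `t`-th digit of `n ^^^ n / 2` is `1`, while
toggling the element `1` only serves to keep the cardinality odd. As `n ↦ n ^^^ n / 2` is injective
and preserves `[0, 2 ^ m)`, `Φ` maps `{1, …, 2 ^ m}` injectively into the odd-cardinality subsets of
`{1, …, m + 1}`, of which there are exactly `2 ^ m`. -/

/-- `θ(k) = 2` if `k` is even and `θ(k) = ν₂(k−1) + 2` if `k` is odd (used for `k ≥ 2`),
where `ν₂(m) = padicValNat 2 m` is the 2-adic valuation. -/
def theta (k : ℕ) : ℕ := if Even k then 2 else padicValNat 2 (k - 1) + 2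

/-- The set-level form `Φ` of the odd-ordered map `φ` of the paper: `Φ(1) = {1}`
and `Φ(k) = Φ(k−1) △ {1, θ(k)}` for `k ≥ 2` (`Φ(0)` is junk). -/
def Phi : ℕ → Finset ℕ
  | 0 => ∅
  | 1 => {1}
  | k + 2 => symmDiff (Phi (k + 1)) {1, theta (k + 2)}

open scoped symmDiff Finset

section OddPowerset

variable {α : Type*} {s t : Finset α} {a : α}

theorem card_symmDiff_add_two_mul_card_inter [DecidableEq α] (s t : Finset α) :
    #(s ∆ t) + 2 * #(s ∩ t) = #s + #t := by
  have h_symmDiff : #(s ∆ t) = #(s \ t) + #(t \ s) :=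
    Finset.card_union_of_disjoint disjoint_sdiff_sdiff
  have h_left : #(s \ t) + #(s ∩ t) = #s := Finset.card_sdiff_add_card_inter s t
  have h_right : #(t \ s) + #(s ∩ t) = #t :=
    Finset.inter_comm t s ▸ Finset.card_sdiff_add_card_inter t s
  omega

theorem odd_card_symmDiff [DecidableEq α] : Odd #(s ∆ t) ↔ (Odd #s ↔ Even #t) := by
  rw [← Nat.odd_add, ← card_symmDiff_add_two_mul_card_inter, Nat.odd_add]
  simp only [even_two_mul, iff_true]

theorem odd_card_symmDiff_singleton [DecidableEq α] : Odd #(s ∆ {a}) ↔ ¬ Odd #s := by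
  rw [odd_card_symmDiff, Finset.card_singleton, iff_false_right Nat.not_even_one]

theorem symmDiff_singleton_subset [DecidableEq α] (hts : t ⊆ s) (ha : a ∈ s) : t ∆ {a} ⊆ s :=
  symmDiff_le (hts.trans le_sup_right) ((Finset.singleton_subset_iff.2 ha).trans le_sup_right)

/-- The collection of the subsets of `s` of odd cardinality. For `s = {1, …, m + 1}` it is the
image of `{1, …, 2 ^ m}` under `Φ`. -/
def oddPowerset (s : Finset α) : Finset (Finset α) := {t ∈ s.powerset | Odd #t}

theorem mem_oddPowerset : t ∈ oddPowerset s ↔ t ⊆ s ∧ Odd #t := by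
  simp only [oddPowerset, Finset.mem_filter, Finset.mem_powerset]

theorem coe_oddPowerset (s : Finset α) :
    (oddPowerset s : Set (Finset α)) = {t : Finset α | t ⊆ s ∧ Odd #t} :=
  Set.ext fun _ ↦ mem_oddPowerset

theorem card_filter_not_odd_powerset (hs : s.Nonempty) :
    #{t ∈ s.powerset | ¬ Odd #t} = #(oddPowerset s) := by
  classical
  obtain ⟨a, ha⟩ := hs
  refine Finset.card_nbij' (· ∆ {a}) (· ∆ {a}) (fun t ht ↦ ?_) (fun t ht ↦ ?_)
    (fun t _ ↦ symmDiff_symmDiff_cancel_right {a} t)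
    (fun t _ ↦ symmDiff_symmDiff_cancel_right {a} t)
  · obtain ⟨hts, h_not_odd⟩ := Finset.mem_filter.1 ht
    exact mem_oddPowerset.2 ⟨symmDiff_singleton_subset (Finset.mem_powerset.1 hts) ha,
      odd_card_symmDiff_singleton.2 h_not_odd⟩
  · obtain ⟨hts, h_odd⟩ := mem_oddPowerset.1 ht
    exact Finset.mem_filter.2 ⟨Finset.mem_powerset.2 (symmDiff_singleton_subset hts ha),
      fun h ↦ odd_card_symmDiff_singleton.1 h h_odd⟩

theorem card_oddPowerset (hs : s.Nonempty) : #(oddPowerset s) = 2 ^ (#s - 1) := by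
  have h_two_mul : 2 * #(oddPowerset s) = 2 ^ #s :=
    calc 2 * #(oddPowerset s)
      _ = #(oddPowerset s) + #{t ∈ s.powerset | ¬ Odd #t} := by
        rw [card_filter_not_odd_powerset hs, two_mul]
      _ = 2 ^ #s := by
        rw [oddPowerset, Finset.card_filter_add_card_filter_not, Finset.card_powerset]
  exact Nat.eq_of_mul_eq_mul_left two_pos
    (h_two_mul.trans (mul_pow_sub_one hs.card_ne_zero 2).symm)

end OddPowerset

theorem testBit_succ_eq_xor (n t : ℕ) :
    (n + 1).testBit t = (n.testBit t ^^ decide (2 ^ t ∣ n + 1)) := by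
  rw [Nat.testBit_eq_decide_div_mod_eq, Nat.testBit_eq_decide_div_mod_eq, Nat.succ_div]
  by_cases h : 2 ^ t ∣ n + 1
  · simp only [h, if_true]
    grind
  · simp only [h, if_false]
    grind

/-- The reflected binary Gray code of `n`, whose binary digits are the sums modulo `2` of adjacent
binary digits of `n`. It encodes the elements of `Φ(n + 1)` other than `1`, shifted down by `2`. -/
def grayCode (n : ℕ) : ℕ := n ^^^ (n / 2)

theorem testBit_grayCode (n t : ℕ) :
    (grayCode n).testBit t = (n.testBit t ^^ n.testBit (t + 1)) := by
  rw [grayCode, Nat.testBit_xor, Nat.testBit_div_two]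

theorem grayCode_succ (n : ℕ) :
    grayCode (n + 1) = grayCode n ^^^ 2 ^ padicValNat 2 (n + 1) := by
  refine Nat.eq_of_testBit_eq fun t ↦ ?_
  have h_dvd (i : ℕ) : 2 ^ i ∣ n + 1 ↔ i ≤ padicValNat 2 (n + 1) :=
    padicValNat_dvd_iff_le n.succ_ne_zero
  have h_flip : (decide (2 ^ t ∣ n + 1) ^^ decide (2 ^ (t + 1) ∣ n + 1)) =
      decide (padicValNat 2 (n + 1) = t) := by
    simp only [h_dvd]
    grind
  calc (grayCode (n + 1)).testBit t
    _ = ((n.testBit t ^^ decide (2 ^ t ∣ n + 1)) ^^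
          (n.testBit (t + 1) ^^ decide (2 ^ (t + 1) ∣ n + 1))) := by
      rw [testBit_grayCode, testBit_succ_eq_xor, testBit_succ_eq_xor]
    _ = ((grayCode n).testBit t ^^ decide (padicValNat 2 (n + 1) = t)) := by
      rw [testBit_grayCode, ← h_flip]
      simp only [Bool.xor_assoc, Bool.xor_left_comm]
    _ = (grayCode n ^^^ 2 ^ padicValNat 2 (n + 1)).testBit t := by
      rw [Nat.testBit_xor, Nat.testBit_two_pow]

theorem grayCode_xor (m n : ℕ) : grayCode (m ^^^ n) = grayCode m ^^^ grayCode n := by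
  simp only [grayCode, Nat.xor_div_two]
  ac_rfl

theorem grayCode_eq_zero {n : ℕ} : grayCode n = 0 ↔ n = 0 := by
  rw [grayCode, Nat.xor_eq_zero_iff]
  omega

theorem grayCode_injective : Function.Injective grayCode := by
  intro m n h
  rwa [← Nat.xor_eq_zero_iff, ← grayCode_xor, grayCode_eq_zero, Nat.xor_eq_zero_iff] at h

theorem grayCode_lt_two_pow {m n : ℕ} (h : n < 2 ^ m) : grayCode n < 2 ^ m :=
  Nat.xor_lt_two_pow h ((Nat.div_le_self n 2).trans_lt h)

theorem theta_add_two (n : ℕ) : theta (n + 2) = padicValNat 2 (n + 1) + 2 := by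
  unfold theta
  split_ifs with h_even
  · have h_not_dvd : ¬ 2 ∣ n + 1 := by grind
    rw [padicValNat.eq_zero_of_not_dvd h_not_dvd]
  · rfl

theorem phi_add_two (n : ℕ) :
    Phi (n + 2) = Phi (n + 1) ∆ {1, padicValNat 2 (n + 1) + 2} := by
  rw [Phi, theta_add_two]

theorem odd_card_phi_succ (n : ℕ) : Odd #(Phi (n + 1)) := by
  induction n with
  | zero => exact odd_one
  | succ n ih =>
    have h_card : #{1, padicValNat 2 (n + 1) + 2} = 2 := Finset.card_pair (by omega)
    rw [phi_add_two, odd_card_symmDiff, h_card]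
    exact iff_of_true ih even_two

theorem zero_notMem_phi_succ (n : ℕ) : 0 ∉ Phi (n + 1) := by
  induction n with
  | zero => simp [Phi]
  | succ n ih => simp [phi_add_two, Finset.mem_symmDiff, ih]

theorem add_two_mem_phi_succ (n t : ℕ) : t + 2 ∈ Phi (n + 1) ↔ (grayCode n).testBit t := by
  induction n with
  | zero => simp [Phi, grayCode]
  | succ n ih =>
    rw [phi_add_two, grayCode_succ, Nat.testBit_xor, Nat.testBit_two_pow, Finset.mem_symmDiff, ih]
    grind

theorem phi_succ_subset_Icc {m n : ℕ} (h : n < 2 ^ m) : Phi (n + 1) ⊆ Finset.Icc 1 (m + 1) := by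
  intro x hx
  match x with
  | 0 => exact absurd hx (zero_notMem_phi_succ n)
  | 1 => simp
  | t + 2 =>
    have h_le : 2 ^ t ≤ grayCode n := Nat.ge_two_pow_of_testBit ((add_two_mem_phi_succ n t).1 hx)
    have h_lt : t < m := (Nat.pow_lt_pow_iff_right one_lt_two).1
      (h_le.trans_lt (grayCode_lt_two_pow h))
    exact Finset.mem_Icc.2 ⟨by omega, by omega⟩

theorem phi_succ_injective : Function.Injective fun n ↦ Phi (n + 1) := by
  intro m n h
  refine grayCode_injective (Nat.eq_of_testBit_eq fun t ↦ ?_)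
  rw [Bool.eq_iff_iff, ← add_two_mem_phi_succ, ← add_two_mem_phi_succ]
  exact iff_of_eq (congrArg (t + 2 ∈ ·) h)

theorem phi_injOn : Set.InjOn Phi (Set.Ici 1) := by
  intro a ha b hb h
  obtain ⟨m, rfl⟩ := Nat.exists_eq_add_of_le' ha
  obtain ⟨n, rfl⟩ := Nat.exists_eq_add_of_le' hb
  exact congrArg (· + 1) (phi_succ_injective h)

theorem phi_mapsTo_oddPowerset (m : ℕ) :
    Set.MapsTo Phi (Finset.Icc 1 (2 ^ m)) (oddPowerset (Finset.Icc 1 (m + 1))) := by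
  intro a ha
  obtain ⟨h_one_le, h_le⟩ := Finset.mem_Icc.1 ha
  obtain ⟨n, rfl⟩ := Nat.exists_eq_add_of_le' h_one_le
  exact mem_oddPowerset.2 ⟨phi_succ_subset_Icc h_le, odd_card_phi_succ n⟩

theorem phi_bijOn_oddPowerset (m : ℕ) :
    Set.BijOn Phi (Finset.Icc 1 (2 ^ m)) (oddPowerset (Finset.Icc 1 (m + 1))) := by
  have h_mapsTo := phi_mapsTo_oddPowerset m
  have h_injOn : Set.InjOn Phi (Finset.Icc 1 (2 ^ m)) :=
    phi_injOn.mono fun _ ha ↦ (Finset.mem_Icc.1 ha).1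
  have h_card : #(oddPowerset (Finset.Icc 1 (m + 1))) = #(Finset.Icc 1 (2 ^ m)) := by
    rw [card_oddPowerset (Finset.nonempty_Icc.2 (Nat.le_add_left 1 m)), Nat.card_Icc, Nat.card_Icc]
    simp only [Nat.add_sub_cancel]
  exact ⟨h_mapsTo, h_injOn,
    Finset.surjOn_of_injOn_of_card_le Phi h_mapsTo h_injOn h_card.le⟩

/-- Theorem 2.4: the map `Φ` is odd-ordered, i.e. for every `k ∈ {1,…,K}` the image
`Φ({1,…,2^(k−1)})` is exactly the collection of odd-cardinality subsets of `{1,…,k}`;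
in particular `Φ` restricts to a bijection from `{1,…,2^(K−1)}` onto the
odd-cardinality subsets of `{1,…,K}`. -/
theorem phi_odd_ordered (K : ℕ) (hK : 1 ≤ K) :
    (∀ k, 1 ≤ k → k ≤ K →
      Phi '' Set.Icc 1 (2 ^ (k - 1))
        = {S : Finset ℕ | S ⊆ Finset.Icc 1 k ∧ Odd S.card}) ∧
    Set.BijOn Phi (Set.Icc 1 (2 ^ (K - 1)))
      {S : Finset ℕ | S ⊆ Finset.Icc 1 K ∧ Odd S.card} := by
  have h_bijOn : ∀ k, 1 ≤ k → Set.BijOn Phi (Set.Icc 1 (2 ^ (k - 1)))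
      {S : Finset ℕ | S ⊆ Finset.Icc 1 k ∧ Odd S.card} := by
    intro k hk
    obtain ⟨m, rfl⟩ := Nat.exists_eq_add_of_le' hk
    rw [← coe_oddPowerset, ← Finset.coe_Icc, Nat.add_sub_cancel]
    exact phi_bijOn_oddPowerset m
  exact ⟨fun k hk _ ↦ (h_bijOn k hk).image_eq, h_bijOn K hK⟩
end

section
/- Let K ∈ ℕ, T > 0, n ∈ ℕ and d ∈ ℕ with d ≤ 2^{K−1}, and let ΔZ₁, …, ΔZ_n be independent ℝ^d-valued random vectors, each distributed as the Haar mimicking vector ΔZ with (ΔZ)^j = h_j^{(K)}(U)·√(T/n). Then E[( ∑_{i=1}^d ( ∑_{ℓ=1}^n (ΔZ_ℓ)^i )² )²] = (d² + 2d)·T² − (2d + d·(d − 2^{K−1}))·T²/n. -/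
/-- The Haar-type function `h_k^(K)` on `{1,…,2^K}`:
`h_k^(K)(x) = 2^((K-1)/2)` if `x = 2k-1`, `-2^((K-1)/2)` if `x = 2k`, and `0` otherwise. -/
noncomputable def haar (K k x : ℕ) : ℝ :=
  if x = 2 * k - 1 then (2 : ℝ) ^ (((K : ℝ) - 1) / 2)
  else if x = 2 * k then -((2 : ℝ) ^ (((K : ℝ) - 1) / 2))
  else 0

/-!
Let `S_n` be the partial sums of i.i.d. centered vectors and `X` a further independent step.
Averaging the expansion `‖X + S_n‖⁴ = (‖X‖² + 2⟪X, S_n⟫ + ‖S_n‖²)²` kills the terms linear in `X`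
or in `S_n`. If the steps are isotropic in dimension `d`, induction on `n` gives
`E‖S_n‖⁴ = n E‖X‖⁴ + n (n - 1) (d² + 2 d)`.

Haar functions of one level are orthonormal with disjoint supports, and their squares take only the
values `0` and `2^(K-1)`. So the vector `Z` they form is centered and isotropic, and
`‖Z‖⁴ = 2^(K-1) ‖Z‖²` holds pointwise, whence `E‖Z‖⁴ = 2^(K-1) d`.
-/

open scoped BigOperators InnerProductSpace

theorem expect_fin_succ_pi {α M : Type*} [Fintype α] [AddCommMonoid M] [Module ℚ≥0 M] {n : ℕ}
    (F : (Fin (n + 1) → α) → M) :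
    𝔼 u, F u = 𝔼 a : α, 𝔼 u : Fin n → α, F (Fin.cons a u) := by
  rw [← Finset.expect_product' Finset.univ Finset.univ
    (fun (a : α) (u : Fin n → α) ↦ F (Fin.cons a u)), Finset.univ_product_univ]
  exact (Fintype.expect_equiv (Fin.consEquiv fun _ ↦ α) _ _ fun _ ↦ rfl).symm

theorem sum_sq_of_pairwise_mul_eq_zero {ι R : Type*} [CommSemiring R] {s : Finset ι} {f : ι → R}
    (hf : (s : Set ι).Pairwise fun i j ↦ f i * f j = 0) :
    (∑ i ∈ s, f i) ^ 2 = ∑ i ∈ s, f i ^ 2 := by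
  rw [sq, Finset.sum_mul_sum]
  refine Finset.sum_congr rfl fun i hi ↦ ?_
  rw [Finset.sum_eq_single_of_mem i hi fun j hj hji ↦ hf hi hj hji.symm, sq]

theorem sum_pi_sum_eq_zero {α ι F : Type*} [Fintype α] [Fintype ι] [DecidableEq ι] [AddCommMonoid F]
    {f : α → F} (hf : ∑ a, f a = 0) : ∑ u : ι → α, ∑ ℓ, f (u ℓ) = 0 := by
  rw [Finset.sum_comm]
  refine Finset.sum_eq_zero fun ℓ _ ↦ ?_
  simpa [hf] using Fintype.sum_piFinset_apply f Finset.univ ℓ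

theorem norm_add_pow_four {E : Type*} [NormedAddCommGroup E] [InnerProductSpace ℝ E] (x y : E) :
    ‖x + y‖ ^ 4 = ‖x‖ ^ 4 + ‖y‖ ^ 4 + 2 * (‖x‖ ^ 2 * ‖y‖ ^ 2) + 4 * ⟪x, y⟫_ℝ ^ 2
      + 4 * (‖x‖ ^ 2 * ⟪x, y⟫_ℝ) + 4 * (‖y‖ ^ 2 * ⟪x, y⟫_ℝ) := by
  rw [show ‖x + y‖ ^ 4 = (‖x + y‖ ^ 2) ^ 2 by ring, norm_add_sq_real]
  ring

section Centered

variable {α β E : Type*} [Fintype α] [Fintype β] [NormedAddCommGroup E] [InnerProductSpace ℝ E]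
  {X : α → E} {Y : β → E}

theorem expect_inner_eq_zero (hX : ∑ a, X a = 0) (v : E) : 𝔼 a, ⟪v, X a⟫_ℝ = 0 := by
  rw [Fintype.expect_eq_sum_div_card, ← inner_sum, hX, inner_zero_right, zero_div]

variable [Nonempty α] [Nonempty β]

theorem expect_norm_add_sq (hY : ∑ b, Y b = 0) :
    𝔼 a, 𝔼 b, ‖X a + Y b‖ ^ 2 = 𝔼 a, ‖X a‖ ^ 2 + 𝔼 b, ‖Y b‖ ^ 2 := by
  simp only [norm_add_sq_real, Finset.expect_add_distrib, ← Finset.mul_expect,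
    expect_inner_eq_zero hY, Fintype.expect_const, mul_zero, add_zero]

theorem expect_norm_add_pow_four (hX : ∑ a, X a = 0) (hY : ∑ b, Y b = 0) :
    𝔼 a, 𝔼 b, ‖X a + Y b‖ ^ 4
      = 𝔼 a, ‖X a‖ ^ 4 + 𝔼 b, ‖Y b‖ ^ 4 + 2 * ((𝔼 a, ‖X a‖ ^ 2) * 𝔼 b, ‖Y b‖ ^ 2)
        + 4 * 𝔼 a, 𝔼 b, ⟪X a, Y b⟫_ℝ ^ 2 := by
  have hX_zero : 𝔼 a, 𝔼 b, ‖Y b‖ ^ 2 * ⟪X a, Y b⟫_ℝ = 0 := by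
    rw [Finset.expect_comm]
    simp only [← Finset.mul_expect, real_inner_comm (Y _), expect_inner_eq_zero hX, mul_zero,
      Finset.expect_const_zero]
  have hY_zero : 𝔼 a, 𝔼 b, ‖X a‖ ^ 2 * ⟪X a, Y b⟫_ℝ = 0 := by
    simp only [← Finset.mul_expect, expect_inner_eq_zero hY, mul_zero, Finset.expect_const_zero]
  simp only [norm_add_pow_four, Finset.expect_add_distrib, ← Finset.mul_expect,
    Fintype.expect_const] at hX_zero hY_zero ⊢
  rw [hX_zero, hY_zero, Finset.expect_mul]
  ring

theorem expect_norm_sum_sq (hX : ∑ a, X a = 0) (n : ℕ) :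
    𝔼 u : Fin n → α, ‖∑ ℓ, X (u ℓ)‖ ^ 2 = n * 𝔼 a, ‖X a‖ ^ 2 := by
  induction n with
  | zero => simp
  | succ n ih =>
    simp only [expect_fin_succ_pi, Fin.sum_univ_succ, Fin.cons_zero, Fin.cons_succ]
    rw [expect_norm_add_sq (sum_pi_sum_eq_zero hX), ih]
    push_cast
    ring

theorem expect_inner_sum_sq (hX : ∑ a, X a = 0) (v : E) (n : ℕ) :
    𝔼 u : Fin n → α, ⟪v, ∑ ℓ, X (u ℓ)⟫_ℝ ^ 2 = n * 𝔼 a, ⟪v, X a⟫_ℝ ^ 2 := by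
  have hv : ∑ a, ⟪v, X a⟫_ℝ = 0 := by rw [← inner_sum, hX, inner_zero_right]
  simpa only [inner_sum, Real.norm_eq_abs, sq_abs] using expect_norm_sum_sq hv n

theorem expect_norm_sum_pow_four (hX : ∑ a, X a = 0) (n : ℕ) :
    𝔼 u : Fin n → α, ‖∑ ℓ, X (u ℓ)‖ ^ 4
      = n * 𝔼 a, ‖X a‖ ^ 4
        + n * (n - 1) * ((𝔼 a, ‖X a‖ ^ 2) ^ 2 + 2 * 𝔼 a, 𝔼 b, ⟪X a, X b⟫_ℝ ^ 2) := by
  induction n with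
  | zero => simp
  | succ n ih =>
    simp only [expect_fin_succ_pi, Fin.sum_univ_succ, Fin.cons_zero, Fin.cons_succ]
    rw [expect_norm_add_pow_four hX (sum_pi_sum_eq_zero hX), ih, expect_norm_sum_sq hX]
    simp only [expect_inner_sum_sq hX, ← Finset.mul_expect]
    push_cast
    ring

end Centered

/-- The vector `X a`, for `a` uniformly distributed on `α`, is isotropic: each unit vector `v` has
`E⟪v, X⟫² = 1`. Being centered is not part of the definition. -/
def IsIsotropic {α E : Type*} [Fintype α] [NormedAddCommGroup E] [InnerProductSpace ℝ E]
    (X : α → E) : Prop :=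
  ∀ v : E, 𝔼 a, ⟪v, X a⟫_ℝ ^ 2 = ‖v‖ ^ 2

namespace IsIsotropic

variable {α E : Type*} [Fintype α] [NormedAddCommGroup E] [InnerProductSpace ℝ E]
  [FiniteDimensional ℝ E] {X : α → E}

theorem expect_norm_sq (hX : IsIsotropic X) : 𝔼 a, ‖X a‖ ^ 2 = Module.finrank ℝ E := by
  let b := stdOrthonormalBasis ℝ E
  calc 𝔼 a, ‖X a‖ ^ 2 = 𝔼 a, ∑ i, ⟪b i, X a⟫_ℝ ^ 2 := by simp only [b.sum_sq_inner_right]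
    _ = ∑ i, ‖b i‖ ^ 2 := by
      rw [Finset.expect_sum_comm]
      exact Finset.sum_congr rfl fun i _ ↦ hX (b i)
    _ = Module.finrank ℝ E := by simp

theorem expect_inner_sq (hX : IsIsotropic X) :
    𝔼 a, 𝔼 b, ⟪X a, X b⟫_ℝ ^ 2 = Module.finrank ℝ E :=
  (Finset.expect_congr rfl fun a _ ↦ hX (X a)).trans hX.expect_norm_sq

theorem expect_norm_sum_pow_four [Nonempty α] (hX : IsIsotropic X) (hX₀ : ∑ a, X a = 0) (n : ℕ) :
    𝔼 u : Fin n → α, ‖∑ ℓ, X (u ℓ)‖ ^ 4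
      = n * 𝔼 a, ‖X a‖ ^ 4
        + n * (n - 1) * ((Module.finrank ℝ E : ℝ) ^ 2 + 2 * Module.finrank ℝ E) := by
  rw [_root_.expect_norm_sum_pow_four hX₀, hX.expect_norm_sq, hX.expect_inner_sq]

end IsIsotropic

section Haar

variable {K : ℕ}

theorem two_rpow_sub_one_div_two_sq (hK : 1 ≤ K) :
    ((2 : ℝ) ^ (((K : ℝ) - 1) / 2)) ^ 2 = 2 ^ (K - 1) := by
  rw [← Real.rpow_mul_natCast zero_le_two, Nat.cast_two, div_mul_cancel₀ _ two_ne_zero,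
    ← Real.rpow_natCast, Nat.cast_pred hK]

theorem haar_mul_haar_of_ne {i j : ℕ} (hij : i ≠ j) (x : ℕ) :
    haar K i x * haar K j x = 0 := by
  unfold haar
  split_ifs <;> first | omega | simp

theorem haar_pow_four (hK : 1 ≤ K) (k x : ℕ) :
    haar K k x ^ 4 = 2 ^ (K - 1) * haar K k x ^ 2 := by
  rw [← two_rpow_sub_one_div_two_sq hK]
  unfold haar
  split_ifs <;> ring

theorem sum_comp_haar {M : Type*} [AddCommMonoid M] {k : ℕ} (hK : 1 ≤ K) (hk : 1 ≤ k)
    (hk' : k ≤ 2 ^ (K - 1)) {φ : ℝ → M} (hφ : φ 0 = 0) :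
    ∑ x : Fin (2 ^ K), φ (haar K k (x + 1))
      = φ (2 ^ (((K : ℝ) - 1) / 2)) + φ (-2 ^ (((K : ℝ) - 1) / 2)) := by
  have hpow : 2 ^ K = 2 * 2 ^ (K - 1) := (mul_pow_sub_one (by omega) 2).symm
  rw [Fintype.sum_eq_add (⟨2 * k - 2, by omega⟩ : Fin (2 ^ K)) ⟨2 * k - 1, by omega⟩]
  · unfold haar
    dsimp only
    rw [if_pos (by omega), if_neg (by omega), if_pos (by omega)]
  · simp only [ne_eq, Fin.mk.injEq]
    omega
  · rintro ⟨x, hx⟩ ⟨hx_left, hx_right⟩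
    simp only [ne_eq, Fin.mk.injEq] at hx_left hx_right
    unfold haar
    dsimp only
    rw [if_neg (by omega), if_neg (by omega), hφ]

theorem sum_haar {k : ℕ} (hK : 1 ≤ K) (hk : 1 ≤ k) (hk' : k ≤ 2 ^ (K - 1)) :
    ∑ x : Fin (2 ^ K), haar K k (x + 1) = 0 :=
  (sum_comp_haar hK hk hk' (φ := id) rfl).trans (add_neg_cancel _)

theorem expect_haar_sq {k : ℕ} (hK : 1 ≤ K) (hk : 1 ≤ k) (hk' : k ≤ 2 ^ (K - 1)) :
    𝔼 x : Fin (2 ^ K), haar K k (x + 1) ^ 2 = 1 := by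
  rw [Fintype.expect_eq_sum_div_card, sum_comp_haar hK hk hk' (φ := (· ^ 2)) (by simp), neg_sq,
    two_rpow_sub_one_div_two_sq hK, ← two_mul, mul_pow_sub_one (by omega)]
  simp

/-- The vector of the Haar functions `h_k^(K)`, `k ∈ s`, at the point `x + 1` of `{1,…,2^K}`. For
`s = {1,…,d}` and uniform `x` this is the Haar mimicking vector without its factor `√(T/n)`. -/
noncomputable def haarVector (K : ℕ) (s : Finset ℕ) (x : Fin (2 ^ K)) : EuclideanSpace ℝ s :=
  WithLp.toLp 2 fun k ↦ haar K k (x + 1)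

variable {s : Finset ℕ}

theorem norm_sum_haarVector_sq {ι : Type*} [Fintype ι] (u : ι → Fin (2 ^ K)) :
    ‖∑ ℓ, haarVector K s (u ℓ)‖ ^ 2 = ∑ k ∈ s, (∑ ℓ, haar K k (u ℓ + 1)) ^ 2 := by
  simp only [EuclideanSpace.real_norm_sq_eq, haarVector, WithLp.ofLp_sum, Finset.sum_apply]
  exact Finset.sum_coe_sort s fun k ↦ (∑ ℓ, haar K k (u ℓ + 1)) ^ 2

theorem inner_haarVector_sq (v : EuclideanSpace ℝ s) (x : Fin (2 ^ K)) :
    ⟪v, haarVector K s x⟫_ℝ ^ 2 = ∑ k, v k ^ 2 * haar K k (x + 1) ^ 2 := by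
  have hdisjoint (i j : s) (hij : i ≠ j) :
      v i * haar K i (x + 1) * (v j * haar K j (x + 1)) = 0 := by
    rw [mul_mul_mul_comm, haar_mul_haar_of_ne (Subtype.coe_ne_coe.2 hij), mul_zero]
  have hinner : ⟪v, haarVector K s x⟫_ℝ = ∑ k, v k * haar K k (x + 1) := by
    simp [PiLp.inner_apply, haarVector, mul_comm]
  rw [hinner, sum_sq_of_pairwise_mul_eq_zero fun i _ j _ ↦ hdisjoint i j]
  simp only [mul_pow]

theorem norm_haarVector_pow_four (hK : 1 ≤ K) (x : Fin (2 ^ K)) :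
    ‖haarVector K s x‖ ^ 4 = 2 ^ (K - 1) * ‖haarVector K s x‖ ^ 2 := by
  have hnorm : ‖haarVector K s x‖ ^ 2 = ∑ k ∈ s, haar K k (x + 1) ^ 2 := by
    simpa using norm_sum_haarVector_sq (s := s) fun _ : Unit ↦ x
  have hdisjoint : (s : Set ℕ).Pairwise fun i j ↦
      haar K i (x + 1) ^ 2 * haar K j (x + 1) ^ 2 = 0 := by
    intro i _ j _ hij
    rw [← mul_pow, haar_mul_haar_of_ne hij, zero_pow two_ne_zero]
  calc ‖haarVector K s x‖ ^ 4 = (∑ k ∈ s, haar K k (x + 1) ^ 2) ^ 2 := by rw [← hnorm, ← pow_mul]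
    _ = ∑ k ∈ s, haar K k (x + 1) ^ 4 := by
      simp only [sum_sq_of_pairwise_mul_eq_zero hdisjoint, ← pow_mul]
    _ = 2 ^ (K - 1) * ‖haarVector K s x‖ ^ 2 := by
      simp only [haar_pow_four hK, ← Finset.mul_sum, hnorm]

theorem sum_haarVector (hK : 1 ≤ K) (hs : s ⊆ Finset.Icc 1 (2 ^ (K - 1))) :
    ∑ x, haarVector K s x = 0 := by
  ext k
  obtain ⟨hk, hk'⟩ := Finset.mem_Icc.1 (hs k.2)
  simpa [haarVector] using sum_haar hK hk hk'

theorem isIsotropic_haarVector (hK : 1 ≤ K) (hs : s ⊆ Finset.Icc 1 (2 ^ (K - 1))) :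
    IsIsotropic (haarVector K s) := by
  intro v
  simp only [inner_haarVector_sq]
  rw [Finset.expect_sum_comm, EuclideanSpace.real_norm_sq_eq]
  refine Finset.sum_congr rfl fun k _ ↦ ?_
  obtain ⟨hk, hk'⟩ := Finset.mem_Icc.1 (hs k.2)
  rw [← Finset.mul_expect, expect_haar_sq hK hk hk', mul_one]

theorem expect_norm_sum_haarVector_pow_four (hK : 1 ≤ K)
    (hs : s ⊆ Finset.Icc 1 (2 ^ (K - 1))) (n : ℕ) :
    𝔼 u : Fin n → Fin (2 ^ K), ‖∑ ℓ, haarVector K s (u ℓ)‖ ^ 4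
      = n * (2 ^ (K - 1) * s.card) + n * (n - 1) * ((s.card : ℝ) ^ 2 + 2 * s.card) := by
  have hiso := isIsotropic_haarVector hK hs
  have hfinrank : Module.finrank ℝ (EuclideanSpace ℝ s) = s.card := by simp
  have hfourth : 𝔼 x, ‖haarVector K s x‖ ^ 4 = 2 ^ (K - 1) * s.card := by
    simp only [norm_haarVector_pow_four hK]
    rw [← Finset.mul_expect, hiso.expect_norm_sq, hfinrank]
  rw [hiso.expect_norm_sum_pow_four (sum_haarVector hK hs), hfourth, hfinrank]

end Haar

/-- Proposition 3.5 (i): for `ΔZ₁,…,ΔZ_n` i.i.d. copies of the Haar mimicking vector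
`(ΔZ_ℓ)^j = h_j^(K)(U_ℓ)·√(T/n)` (with `U₁,…,U_n` i.i.d. uniform on `{1,…,2^K}`,
modelled by the uniform measure on `(Fin (2^K))^n`, coordinate `ℓ` encoding
`U_ℓ = u ℓ + 1`),
`E[(∑_{i=1}^d (∑_{ℓ=1}^n (ΔZ_ℓ)^i)²)²] = (d² + 2d)·T² − (2d + d·(d − 2^(K−1)))·T²/n`. -/
theorem haar_em_fourth_moment (K : ℕ) (hK : 1 ≤ K) (T : ℝ) (hT : 0 < T)
    (n d : ℕ) (hn : 0 < n) (hd : d ≤ 2 ^ (K - 1)) :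
    (∑ u : Fin n → Fin (2 ^ K),
        (∑ i ∈ Finset.Icc 1 d,
            (∑ ℓ : Fin n, haar K i ((u ℓ : ℕ) + 1) * Real.sqrt (T / n)) ^ 2) ^ 2)
      / ((2 : ℝ) ^ K) ^ n
      = ((d : ℝ) ^ 2 + 2 * d) * T ^ 2
        - (2 * d + d * ((d : ℝ) - 2 ^ (K - 1))) * T ^ 2 / n := by
  have hscale (u : Fin n → Fin (2 ^ K)) :
      (∑ i ∈ Finset.Icc 1 d,
          (∑ ℓ : Fin n, haar K i ((u ℓ : ℕ) + 1) * Real.sqrt (T / n)) ^ 2) ^ 2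
        = (T / n) ^ 2 * ‖∑ ℓ, haarVector K (Finset.Icc 1 d) (u ℓ)‖ ^ 4 := by
    simp only [← Finset.sum_mul, mul_pow, Real.sq_sqrt (div_nonneg hT.le n.cast_nonneg),
      ← norm_sum_haarVector_sq]
    ring
  have hcard : ((2 : ℝ) ^ K) ^ n = Fintype.card (Fin n → Fin (2 ^ K)) := by simp
  rw [hcard, ← Fintype.expect_eq_sum_div_card]
  simp only [hscale]
  rw [← Finset.mul_expect, expect_norm_sum_haarVector_pow_four hK (Finset.Icc_subset_Icc_right hd),
    Nat.card_Icc, Nat.add_sub_cancel]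
  field_simp
  ring
end

section
/- Let K ∈ ℕ, T > 0, n ∈ ℕ and d ∈ ℕ with d ≤ 2^{K−1}, let φ be a bijection from {1,…,2^{K−1}} onto the collection of odd-cardinality subsets of {1,…,K}, and let ΔZ₁, …, ΔZ_n be independent ℝ^d-valued random vectors, each distributed as the Walsh mimicking vector ΔZ with (ΔZ)^j = τ_{φ(j)}·√(T/n). Then E[( ∑_{i=1}^d ( ∑_{ℓ=1}^n (ΔZ_ℓ)^i )² )²] = (d² + 2d)·T² − 2d·T²/n. -/
/-- The coordinate Rademacher variable `τ_i` on `Ω_K = {-1,1}^K`, with `{-1,1}`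
encoded by `Bool` (`true ↦ 1`, `false ↦ -1`). -/
noncomputable def tau (K : ℕ) (i : Fin K) (ω : Fin K → Bool) : ℝ :=
  if ω i then 1 else -1

/-- The Walsh variable `τ_S = ∏_{i ∈ S} τ_i`, with `τ_∅ ≡ 1`. -/
noncomputable def tauS (K : ℕ) (S : Finset (Fin K)) (ω : Fin K → Bool) : ℝ :=
  ∏ i ∈ S, tau K i ω

/-!
In the fourth moment of a sum of `n` i.i.d. centred random vectors, a quadruple of time indices
contributes only if all four agree (`n` quadruples) or they form two distinct pairs (`n (n - 1)`
quadruples for each of the three pairings). Since `τ_S τ_U = τ_{S ∆ U}`, the Walsh functions of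
distinct nonempty sets are centred and orthonormal, so the distinct pairs contribute as they do for
a Gaussian vector. The defect comes from the diagonal alone: as `τ_S² = 1`, a Walsh increment of
unit variance in `ℝ^d` has fourth moment of the norm `d²` in place of the Gaussian `d² + 2 d`.
-/

section

open Finset
open scoped BigOperators symmDiff

section IidSum

section Module

variable {A M : Type*} [AddCommMonoid M] {n : ℕ}

/-- The sum of `n` independent copies of a random variable `a` on the finite uniform probability
space `A`; independence is encoded by the uniform measure on the product space
`Fin n → A`. -/
def iidSum (a : A → M) (ω : Fin n → A) : M :=
  ∑ l, a (ω l)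

lemma iidSum_cons (a : A → M) (x : A) (ω : Fin n → A) :
    iidSum a (Fin.cons x ω : Fin (n + 1) → A) = a x + iidSum a ω := by
  simp only [iidSum, Fin.sum_univ_succ, Fin.cons_zero, Fin.cons_succ]

variable [Fintype A] [Module ℚ≥0 M]

lemma expect_fin_succ_pi_s17 (f : (Fin (n + 1) → A) → M) :
    𝔼 ω, f ω = 𝔼 ω : Fin n → A, 𝔼 x, f (Fin.cons x ω) := by
  rw [expect_comm, ← expect_product', univ_product_univ]
  exact (Fintype.expect_equiv (Fin.consEquiv fun _ ↦ A) _ _ fun _ ↦ rfl).symm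

lemma expect_iidSum [Nonempty A] (a : A → M) :
    𝔼 ω : Fin n → A, iidSum a ω = n • 𝔼 x, a x := by
  induction n with
  | zero => simp [iidSum]
  | succ n ih =>
    simp only [expect_fin_succ_pi_s17, iidSum_cons, expect_add_distrib, Fintype.expect_const, ih,
      succ_nsmul']

end Module

variable {A R : Type*} [Fintype A] [CommRing R] [Algebra ℚ≥0 R]

lemma expect_sq_sum {ι : Type*} (s : Finset ι) (f : ι → A → R) :
    𝔼 x, (∑ i ∈ s, f i x) ^ 2 = ∑ i ∈ s, ∑ j ∈ s, 𝔼 x, f i x * f j x := by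
  simp only [sq, sum_mul_sum, expect_sum_comm]

variable [Nonempty A] {n : ℕ} (a b : A → R)

lemma expect_add_mul_add (s t : R) :
    𝔼 x, (a x + s) * (b x + t)
      = 𝔼 x, a x * b x + (𝔼 x, a x) * t + s * 𝔼 x, b x + s * t := by
  simp only [add_mul, mul_add, expect_add_distrib, ← mul_expect, ← expect_mul,
    Fintype.expect_const]
  ring

variable {a b} in
lemma expect_add_sq_mul_add_sq (ha : 𝔼 x, a x = 0) (hb : 𝔼 x, b x = 0) (s t : R) :
    𝔼 x, (a x + s) ^ 2 * (b x + t) ^ 2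
      = 𝔼 x, a x ^ 2 * b x ^ 2 + 2 * (𝔼 x, a x ^ 2 * b x) * t + 2 * (𝔼 x, a x * b x ^ 2) * s
        + (𝔼 x, a x ^ 2) * t ^ 2 + (𝔼 x, b x ^ 2) * s ^ 2 + 4 * (𝔼 x, a x * b x) * (s * t)
        + s ^ 2 * t ^ 2 := by
  have expand (x : A) : (a x + s) ^ 2 * (b x + t) ^ 2
      = a x ^ 2 * b x ^ 2 + a x ^ 2 * b x * (2 * t) + a x * b x ^ 2 * (2 * s)
        + a x ^ 2 * t ^ 2 + b x ^ 2 * s ^ 2 + a x * b x * (4 * (s * t))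
        + a x * (2 * s * t ^ 2) + b x * (2 * s ^ 2 * t) + s ^ 2 * t ^ 2 := by ring
  simp only [expand, expect_add_distrib, ← expect_mul, Fintype.expect_const, ha, hb]
  ring

lemma expect_iidSum_mul_iidSum :
    𝔼 ω : Fin n → A, iidSum a ω * iidSum b ω
      = n * (𝔼 x, a x * b x) + n * (n - 1) * ((𝔼 x, a x) * 𝔼 x, b x) := by
  induction n with
  | zero => simp [iidSum]
  | succ n ih =>
    simp only [expect_fin_succ_pi_s17, iidSum_cons, expect_add_mul_add, expect_add_distrib,
      ← mul_expect, ← expect_mul, Fintype.expect_const, expect_iidSum, nsmul_eq_mul, ih]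
    push_cast
    ring

variable {a b} in
lemma expect_iidSum_sq_mul_iidSum_sq (ha : 𝔼 x, a x = 0) (hb : 𝔼 x, b x = 0) :
    𝔼 ω : Fin n → A, iidSum a ω ^ 2 * iidSum b ω ^ 2
      = n * (𝔼 x, a x ^ 2 * b x ^ 2)
        + n * (n - 1) * ((𝔼 x, a x ^ 2) * (𝔼 x, b x ^ 2) + 2 * (𝔼 x, a x * b x) ^ 2) := by
  induction n with
  | zero => simp [iidSum]
  | succ n ih =>
    have expect_iidSum_sq (c : A → R) (hc : 𝔼 x, c x = 0) :
        𝔼 ω : Fin n → A, iidSum c ω ^ 2 = n * 𝔼 x, c x ^ 2 := by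
      simp only [sq, expect_iidSum_mul_iidSum, hc, mul_zero, add_zero]
    simp only [expect_fin_succ_pi_s17, iidSum_cons, expect_add_sq_mul_add_sq ha hb,
      expect_add_distrib, ← mul_expect, Fintype.expect_const, expect_iidSum, nsmul_eq_mul,
      expect_iidSum_mul_iidSum, expect_iidSum_sq a ha, expect_iidSum_sq b hb, ih, ha, hb]
    push_cast
    ring

lemma expect_sum_iidSum_sq_sq {ι : Type*} {s : Finset ι} {X : ι → A → R}
    (hX : ∀ i ∈ s, 𝔼 x, X i x = 0) :
    𝔼 ω : Fin n → A, (∑ i ∈ s, iidSum (X i) ω ^ 2) ^ 2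
      = n * (𝔼 x, (∑ i ∈ s, X i x ^ 2) ^ 2)
        + n * (n - 1) * ((∑ i ∈ s, 𝔼 x, X i x ^ 2) ^ 2
          + 2 * ∑ i ∈ s, ∑ j ∈ s, (𝔼 x, X i x * X j x) ^ 2) := by
  calc 𝔼 ω : Fin n → A, (∑ i ∈ s, iidSum (X i) ω ^ 2) ^ 2
      = ∑ i ∈ s, ∑ j ∈ s, (n * (𝔼 x, X i x ^ 2 * X j x ^ 2)
        + n * (n - 1) * ((𝔼 x, X i x ^ 2) * (𝔼 x, X j x ^ 2) + 2 * (𝔼 x, X i x * X j x) ^ 2)) := by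
        rw [expect_sq_sum]
        exact sum_congr rfl fun i hi ↦ sum_congr rfl fun j hj ↦
          expect_iidSum_sq_mul_iidSum_sq (hX i hi) (hX j hj)
    _ = _ := by
        rw [expect_sq_sum, sq (∑ i ∈ s, 𝔼 x, X i x ^ 2), sum_mul_sum]
        simp only [sum_add_distrib, ← mul_sum]

end IidSum

section Walsh

variable {K : ℕ}

lemma tau_mul_self (i : Fin K) (ω : Fin K → Bool) : tau K i ω * tau K i ω = 1 := by
  unfold tau
  split_ifs <;> norm_num

lemma tauS_eq_prod_univ (S : Finset (Fin K)) (ω : Fin K → Bool) :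
    tauS K S ω = ∏ i, if i ∈ S then tau K i ω else 1 :=
  (Fintype.prod_ite_mem S _).symm

lemma tauS_empty (ω : Fin K → Bool) : tauS K ∅ ω = 1 :=
  prod_empty

lemma tauS_mul_tauS (S U : Finset (Fin K)) (ω : Fin K → Bool) :
    tauS K S ω * tauS K U ω = tauS K (S ∆ U) ω := by
  simp only [tauS_eq_prod_univ, ← prod_mul_distrib]
  refine prod_congr rfl fun i _ ↦ ?_
  by_cases hS : i ∈ S <;> by_cases hU : i ∈ U <;> simp [mem_symmDiff, hS, hU, tau_mul_self]

lemma tauS_sq (S : Finset (Fin K)) (ω : Fin K → Bool) : tauS K S ω ^ 2 = 1 := by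
  rw [sq, tauS_mul_tauS, symmDiff_self, bot_eq_empty, tauS_empty]

lemma expect_tauS_of_nonempty {S : Finset (Fin K)} (hS : S.Nonempty) : 𝔼 ω, tauS K S ω = 0 := by
  obtain ⟨i, hi⟩ := hS
  have sum_prod : ∑ ω, tauS K S ω
      = ∏ j, ∑ ε : Bool, if j ∈ S then (if ε then (1 : ℝ) else -1) else 1 := by
    simp only [tauS_eq_prod_univ, tau, Fintype.prod_sum]
  rw [Fintype.expect_eq_sum_div_card, sum_prod, prod_eq_zero (mem_univ i), zero_div]
  simp [hi]

lemma expect_tauS_mul_tauS (S U : Finset (Fin K)) :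
    𝔼 ω, tauS K S ω * tauS K U ω = if S = U then 1 else 0 := by
  simp only [tauS_mul_tauS]
  split_ifs with h
  · simp only [h, symmDiff_self, bot_eq_empty, tauS_empty, Fintype.expect_const]
  · exact expect_tauS_of_nonempty (symmDiff_nonempty.mpr h)

variable {ι : Type*} {s : Finset ι} {φ : ι → Finset (Fin K)}

lemma sum_sum_expect_tauS_mul_tauS_sq (hinj : Set.InjOn φ s) :
    ∑ i ∈ s, ∑ j ∈ s, (𝔼 ω, tauS K (φ i) ω * tauS K (φ j) ω) ^ 2 = #s := by
  classical
  have delta {i j : ι} (hi : i ∈ s) (hj : j ∈ s) :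
      (𝔼 ω, tauS K (φ i) ω * tauS K (φ j) ω) ^ 2 = if i = j then 1 else 0 := by
    simp only [expect_tauS_mul_tauS, hinj.eq_iff hi hj, ite_pow, one_pow, ne_eq,
      OfNat.ofNat_ne_zero, not_false_eq_true, zero_pow]
  calc ∑ i ∈ s, ∑ j ∈ s, (𝔼 ω, tauS K (φ i) ω * tauS K (φ j) ω) ^ 2
      = ∑ i ∈ s, ∑ j ∈ s, if i = j then 1 else 0 :=
        sum_congr rfl fun i hi ↦ sum_congr rfl fun j hj ↦ delta hi hj
    _ = #s := by simp

lemma expect_sum_iidSum_tauS_sq_sq (n : ℕ) (hinj : Set.InjOn φ s)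
    (hne : ∀ i ∈ s, (φ i).Nonempty) :
    𝔼 ω : Fin n → Fin K → Bool, (∑ i ∈ s, iidSum (tauS K (φ i)) ω ^ 2) ^ 2
      = ((#s : ℝ) ^ 2 + 2 * #s) * n ^ 2 - 2 * #s * n := by
  rw [expect_sum_iidSum_sq_sq fun i hi ↦ expect_tauS_of_nonempty (hne i hi),
    sum_sum_expect_tauS_mul_tauS_sq hinj]
  simp only [tauS_sq, Fintype.expect_const, sum_const, nsmul_eq_mul, mul_one]
  ring

theorem walsh_em_fourth_moment_general {T : ℝ} (hT : 0 ≤ T) {n : ℕ} (hn : n ≠ 0)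
    (hinj : Set.InjOn φ s) (hne : ∀ i ∈ s, (φ i).Nonempty) :
    (∑ ω : Fin n → Fin K → Bool,
        (∑ i ∈ s, (∑ ℓ : Fin n, tauS K (φ i) (ω ℓ) * Real.sqrt (T / n)) ^ 2) ^ 2)
      / ((2 : ℝ) ^ K) ^ n
      = ((#s : ℝ) ^ 2 + 2 * #s) * T ^ 2 - 2 * #s * T ^ 2 / n := by
  have rescale (ω : Fin n → Fin K → Bool) :
      (∑ i ∈ s, (∑ ℓ : Fin n, tauS K (φ i) (ω ℓ) * Real.sqrt (T / n)) ^ 2) ^ 2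
        = (∑ i ∈ s, iidSum (tauS K (φ i)) ω ^ 2) ^ 2 * (T / n) ^ 2 := by
    simp only [← sum_mul, mul_pow, Real.sq_sqrt (div_nonneg hT n.cast_nonneg), iidSum]
  have card_paths : ((2 : ℝ) ^ K) ^ n = Fintype.card (Fin n → Fin K → Bool) := by simp
  rw [card_paths, ← Fintype.expect_eq_sum_div_card]
  simp only [rescale, ← expect_mul, expect_sum_iidSum_tauS_sq_sq n hinj hne]
  field_simp

end Walsh

end

/-- Proposition 3.5 (ii): for `ΔZ₁,…,ΔZ_n` i.i.d. copies of the Walsh mimicking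
vector `(ΔZ_ℓ)^j = τ_{φ(j)}·√(T/n)` (independent copies modelled by the uniform
measure on the product `(Ω_K)^n`, with `Ω_K = {-1,1}^K` of cardinality `2^K`),
`E[(∑_{i=1}^d (∑_{ℓ=1}^n (ΔZ_ℓ)^i)²)²] = (d² + 2d)·T² − 2d·T²/n`. -/
theorem walsh_em_fourth_moment (K : ℕ) (hK : 1 ≤ K) (T : ℝ) (hT : 0 < T)
    (n d : ℕ) (hn : 0 < n) (hd : d ≤ 2 ^ (K - 1))
    (φ : ℕ → Finset (Fin K))
    (hφ : Set.BijOn φ (↑(Finset.Icc 1 (2 ^ (K - 1))) : Set ℕ)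
      {S : Finset (Fin K) | Odd S.card}) :
    (∑ ω : Fin n → Fin K → Bool,
        (∑ i ∈ Finset.Icc 1 d,
            (∑ ℓ : Fin n, tauS K (φ i) (ω ℓ) * Real.sqrt (T / n)) ^ 2) ^ 2)
      / ((2 : ℝ) ^ K) ^ n
      = ((d : ℝ) ^ 2 + 2 * d) * T ^ 2 - 2 * d * T ^ 2 / n := by
  have hsub : (Finset.Icc 1 d : Set ℕ) ⊆ Finset.Icc 1 (2 ^ (K - 1)) :=
    Finset.coe_subset.mpr (Finset.Icc_subset_Icc_right hd)
  simpa using walsh_em_fourth_moment_general hT.le hn.ne' (hφ.injOn.mono hsub)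
    fun i hi ↦ Finset.card_pos.mp (hφ.mapsTo (hsub hi)).pos
end
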